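/- For arbitrary nonzero q½, t½: Rad ⊆ ker(ev), and every A-submodule U of V with U ⊆ ker(ev) satisfies U ⊆ Rad. That is, Rad is the greatest A-submodule of V contained in the hyperplane {f ∈ V : f(t⁻½) = 0}. -/

import Mathlib

noncomputable section

/-- `V = ℂ[X, X⁻¹]`, the space of complex Laurent polynomials. -/
abbrev V : Type := LaurentPolynomial ℂ

/-- The monomial `X ^ m`. -/
def Xm (m : ℤ) : V := LaurentPolynomial.T m

/-- The radical of the duality pairing. -/
def Rad (pair : V →ₗ[ℂ] V →ₗ[ℂ] ℂ) : Submodule ℂ V := LinearMap.ker pair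

/-!
The pairing is determined by `{1, g} = ev g` and `{X f, g} = {f, Y⁻¹ g}`. Moving `T` and `π` across
it, `T` is self-adjoint and `π` has adjoint `X T`, so `Y⁻¹ = T⁻¹ π` has adjoint `X`; hence the
flipped pairing satisfies the same two equations, and the pairing is symmetric. If `U ⊆ ker ev` is
stable under `Y` and `Y⁻¹`, and `f ∈ U`, then `{f, Xᵐ} = {Xᵐ, f} = ev (Y⁻ᵐ f) = 0` for all `m`, so
`f ∈ Rad`; conversely `f ∈ Rad` gives `ev f = {1, f} = {f, 1} = 0`.
-/

section LaurentPolynomials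

open LaurentPolynomial

variable {R : Type*} [CommRing R]

theorem T_one_mul_T_neg_one_mul (f : R[T;T⁻¹]) : T 1 * (T (-1) * f) = f := by
  rw [← mul_assoc, ← T_add, add_neg_cancel, T_zero, one_mul]

theorem T_neg_one_mul_T_one_mul (f : R[T;T⁻¹]) : T (-1) * (T 1 * f) = f := by
  rw [← mul_assoc, ← T_add, neg_add_cancel, T_zero, one_mul]

theorem T_two_sub_one_mem_nonZeroDivisors :
    (T 2 - 1 : R[T;T⁻¹]) ∈ nonZeroDivisors R[T;T⁻¹] := by
  have h : (Polynomial.X ^ 2 - 1 : Polynomial R) ∈ nonZeroDivisors (Polynomial R) :=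
    (Polynomial.monic_X_pow_sub_C 1 two_ne_zero).mem_nonZeroDivisors
  simpa [Polynomial.toLaurent_X_pow] using
    IsLocalization.map_nonZeroDivisors_le (Submonoid.powers (Polynomial.X : Polynomial R))
      R[T;T⁻¹] (Submonoid.mem_map_of_mem _ h)

section Ext

variable {M : Type*} [AddCommGroup M] [Module R M] {A B : R[T;T⁻¹] →ₗ[R] M}

theorem linearMap_ext_T (h : ∀ m : ℤ, A (T m) = B (T m)) : A = B := by
  refine LinearMap.ext fun f ↦ ?_
  induction f using LaurentPolynomial.induction_on' with
  | add p q hp hq => rw [map_add, map_add, hp, hq]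
  | C_mul_T n a => rw [← smul_eq_C_mul, map_smul, map_smul, h]

theorem linearMap_ext_T_one_mul (one : A 1 = B 1)
    (step : ∀ f, A (T 1 * f) = B (T 1 * f) ↔ A f = B f) : A = B := by
  refine linearMap_ext_T fun m ↦ ?_
  induction m using Int.induction_on with
  | zero => rwa [T_zero]
  | succ n ih => rwa [add_comm, T_add, step]
  | pred n ih => rwa [← step, ← T_add, add_sub_cancel]

end Ext

theorem apply_eq_invert_of_apply_T {S : R[T;T⁻¹] →ₗ[R] R[T;T⁻¹]} (hS : ∀ m : ℤ, S (T m) = T (-m))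
    (f : R[T;T⁻¹]) : S f = invert f := by
  have h : S = invert.toLinearMap := linearMap_ext_T fun m ↦ by simp [hS]
  exact LinearMap.congr_fun h f

theorem eval_T_one_mul {x : Rˣ} {ev : R[T;T⁻¹] →ₗ[R] R} (hev : ∀ m : ℤ, ev (T m) = ↑(x ^ m))
    (f : R[T;T⁻¹]) : ev (T 1 * f) = x * ev f := by
  have h : ev ∘ₗ LinearMap.mulLeft R (T 1) = (x : R) • ev :=
    linearMap_ext_T fun m ↦ by
      simp only [LinearMap.comp_apply, LinearMap.mulLeft_apply, LinearMap.smul_apply, ← T_add,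
        hev, zpow_one_add, Units.val_mul, smul_eq_mul]
  exact LinearMap.congr_fun h f

theorem eval_T_neg_one_mul {x : Rˣ} {ev : R[T;T⁻¹] →ₗ[R] R}
    (hev : ∀ m : ℤ, ev (T m) = ↑(x ^ m)) (f : R[T;T⁻¹]) :
    ev (T (-1) * f) = ↑x⁻¹ * ev f := by
  have h := eval_T_one_mul hev (T (-1) * f)
  rw [T_one_mul_T_neg_one_mul] at h
  rw [h, Units.inv_mul_cancel_left]

/-- The operator `π` of the polynomial representation, `π(f)(X) = f(q½ X⁻¹)`, described by its
values on monomials; the parameter `q2` is `q½`. -/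
def IsReflection (q2 : Rˣ) (π : R[T;T⁻¹] →ₗ[R] R[T;T⁻¹]) : Prop :=
  ∀ m : ℤ, π (T m) = (↑(q2 ^ m) : R) • T (-m)

namespace IsReflection

variable {q2 : Rˣ} {π : R[T;T⁻¹] →ₗ[R] R[T;T⁻¹]}

theorem apply_one (hπ : IsReflection q2 π) : π 1 = 1 := by
  simpa using hπ 0

theorem apply_T_one_mul (hπ : IsReflection q2 π) (f : R[T;T⁻¹]) :
    π (T 1 * f) = (q2 : R) • (T (-1) * π f) := by
  have h : π ∘ₗ LinearMap.mulLeft R (T 1) = (q2 : R) • (LinearMap.mulLeft R (T (-1)) ∘ₗ π) :=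
    linearMap_ext_T fun m ↦ by
      simp only [LinearMap.comp_apply, LinearMap.mulLeft_apply, LinearMap.smul_apply, ← T_add,
        hπ _, mul_smul_comm, smul_smul, neg_add, zpow_one_add, Units.val_mul]
  exact LinearMap.congr_fun h f

theorem apply_apply (hπ : IsReflection q2 π) (f : R[T;T⁻¹]) : π (π f) = f := by
  have h : π ∘ₗ π = LinearMap.id := linearMap_ext_T fun m ↦ by
    simp only [LinearMap.comp_apply, LinearMap.id_apply, hπ _, map_smul, smul_smul,
      ← Units.val_mul, ← zpow_add, add_neg_cancel, zpow_zero, Units.val_one, one_smul, neg_neg]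
  exact LinearMap.congr_fun h f

end IsReflection

/-- The Demazure–Lusztig operator `T = t½ s + (t½ - t⁻½) (X² - 1)⁻¹ (s - 1)`, with the denominator
`X² - 1` cleared; the parameter `t2` is `t½`, and `s` is `LaurentPolynomial.invert`. It is written
`τ` because `T` denotes monomials in Mathlib. -/
def IsDemazureLusztig (t2 : Rˣ) (τ : R[T;T⁻¹] →ₗ[R] R[T;T⁻¹]) : Prop :=
  ∀ f, (T 2 - 1) * τ f =
    (t2 : R) • ((T 2 - 1) * invert f) + (t2 - ↑t2⁻¹ : R) • (invert f - f)

namespace IsDemazureLusztig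

variable {t2 : Rˣ} {τ : R[T;T⁻¹] →ₗ[R] R[T;T⁻¹]}

theorem apply_one (hτ : IsDemazureLusztig t2 τ) : τ 1 = (t2 : R) • 1 := by
  rw [← mul_cancel_left_mem_nonZeroDivisors T_two_sub_one_mem_nonZeroDivisors, hτ]
  simp

theorem apply_T_one_mul (hτ : IsDemazureLusztig t2 τ) (f : R[T;T⁻¹]) :
    τ (T 1 * f) = T (-1) * (τ f - (t2 - ↑t2⁻¹ : R) • f) := by
  rw [← mul_cancel_left_mem_nonZeroDivisors T_two_sub_one_mem_nonZeroDivisors, hτ, map_mul,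
    invert_T]
  have h := hτ f
  have hT : (T (-1) * T 2 : R[T;T⁻¹]) = T 1 := by rw [← T_add]; rfl
  simp only [smul_eq_C_mul] at h ⊢
  linear_combination -T (-1) * h + C (t2 - ↑t2⁻¹ : R) * f * hT

theorem apply_T_neg_one_mul (hτ : IsDemazureLusztig t2 τ) (f : R[T;T⁻¹]) :
    τ (T (-1) * f) = T 1 * τ f + (t2 - ↑t2⁻¹ : R) • (T (-1) * f) := by
  have h := hτ.apply_T_one_mul (T (-1) * f)
  rw [T_one_mul_T_neg_one_mul] at h
  rw [h, T_one_mul_T_neg_one_mul, sub_add_cancel]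

/-- Both relations for `T X` and `T X⁻¹` are affine in `T`, which makes `T² - (t½ - t⁻½) T` commute
with `X`; it also fixes `1`. -/
theorem apply_apply (hτ : IsDemazureLusztig t2 τ) (f : R[T;T⁻¹]) :
    τ (τ f) = (t2 - ↑t2⁻¹ : R) • τ f + f := by
  have h : τ ∘ₗ τ = (t2 - ↑t2⁻¹ : R) • τ + LinearMap.id := by
    refine linearMap_ext_T_one_mul ?_ fun f ↦ ?_
    · simp only [LinearMap.comp_apply, LinearMap.add_apply, LinearMap.smul_apply,
        LinearMap.id_apply, hτ.apply_one, map_smul, smul_smul, sub_mul, sub_smul,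
        Units.inv_mul, one_smul, sub_add_cancel]
    · have hcomm : τ (τ (T 1 * f)) - (t2 - ↑t2⁻¹ : R) • τ (T 1 * f) =
          T 1 * (τ (τ f) - (t2 - ↑t2⁻¹ : R) • τ f) := by
        rw [hτ.apply_T_one_mul, hτ.apply_T_neg_one_mul, add_sub_cancel_right, map_sub, map_smul]
      simp only [LinearMap.comp_apply, LinearMap.add_apply, LinearMap.smul_apply,
        LinearMap.id_apply, ← sub_eq_iff_eq_add', hcomm]
      exact (isUnit_T 1).mul_right_inj
  exact LinearMap.congr_fun h f

theorem apply_sub_smul (hτ : IsDemazureLusztig t2 τ) (f : R[T;T⁻¹]) :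
    τ (τ f - (t2 - ↑t2⁻¹ : R) • f) = f := by
  rw [map_sub, map_smul, hτ.apply_apply, add_sub_cancel_left]

theorem eval_apply (hτ : IsDemazureLusztig t2 τ) {ev : R[T;T⁻¹] →ₗ[R] R}
    (hev : ∀ m : ℤ, ev (T m) = ↑(t2⁻¹ ^ m)) (f : R[T;T⁻¹]) : ev (τ f) = t2 * ev f := by
  have h : ev ∘ₗ τ = (t2 : R) • ev := by
    refine linearMap_ext_T_one_mul ?_ fun f ↦ ?_
    · simp only [LinearMap.comp_apply, LinearMap.smul_apply, hτ.apply_one, map_smul]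
    · have hX : ev (τ (T 1 * f)) = t2 * (ev (τ f) - (t2 - ↑t2⁻¹) * ev f) := by
        rw [hτ.apply_T_one_mul, eval_T_neg_one_mul hev, inv_inv, map_sub, map_smul, smul_eq_mul]
      simp only [LinearMap.comp_apply, LinearMap.smul_apply, smul_eq_mul, hX,
        eval_T_one_mul hev, Units.mul_right_inj]
      constructor <;> intro h <;> linear_combination h
  exact LinearMap.congr_fun h f

section Inverse

variable {q2 : Rˣ} {π : R[T;T⁻¹] →ₗ[R] R[T;T⁻¹]} {Y : R[T;T⁻¹] ≃ₗ[R] R[T;T⁻¹]}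

theorem symm_apply (hτ : IsDemazureLusztig t2 τ) (hπ : IsReflection q2 π)
    (hY : ∀ f, Y f = π (τ f)) (f : R[T;T⁻¹]) :
    Y.symm f = τ (π f) - (t2 - ↑t2⁻¹ : R) • π f := by
  rw [LinearEquiv.symm_apply_eq, hY, hτ.apply_sub_smul, hπ.apply_apply]

theorem mem_and_symm_mem (hτ : IsDemazureLusztig t2 τ) (hπ : IsReflection q2 π)
    (hY : ∀ f, Y f = π (τ f)) {U : Submodule R R[T;T⁻¹]} (hU : ∀ f ∈ U, τ f ∈ U ∧ π f ∈ U) :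
    ∀ f ∈ U, Y f ∈ U ∧ Y.symm f ∈ U := by
  intro f hf
  obtain ⟨hτf, hπf⟩ := hU f hf
  rw [hY, hτ.symm_apply hπ hY]
  exact ⟨(hU _ hτf).2, U.sub_mem (hU _ hπf).1 (U.smul_mem _ hπf)⟩

theorem symm_one (hτ : IsDemazureLusztig t2 τ) (hπ : IsReflection q2 π)
    (hY : ∀ f, Y f = π (τ f)) : Y.symm 1 = (↑t2⁻¹ : R) • 1 := by
  rw [hτ.symm_apply hπ hY, hπ.apply_one, hτ.apply_one, ← sub_smul, sub_sub_cancel]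

end Inverse

end IsDemazureLusztig

/-- The duality pairing `{f, g} = ev (L_f g)`, where `L_f` substitutes `Y⁻¹` for `X` in `f`,
described by its values on monomials `f = Xᵐ`. -/
def IsDualityPairing (Y : R[T;T⁻¹] ≃ₗ[R] R[T;T⁻¹]) (ev : R[T;T⁻¹] →ₗ[R] R)
    (B : LinearMap.BilinForm R R[T;T⁻¹]) : Prop :=
  ∀ (m : ℤ) (g : R[T;T⁻¹]), B (T m) g = ev ((Y ^ (-m)) g)

section Pairing

variable {Y : R[T;T⁻¹] ≃ₗ[R] R[T;T⁻¹]} {ev : R[T;T⁻¹] →ₗ[R] R} {B : LinearMap.BilinForm R R[T;T⁻¹]}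

theorem isDualityPairing_iff : IsDualityPairing Y ev B ↔
    B 1 = ev ∧ ∀ f g, B (T 1 * f) g = B f (Y.symm g) := by
  have inv_apply (g : R[T;T⁻¹]) : (Y⁻¹) g = Y.symm g := rfl
  constructor
  · intro hB
    refine ⟨LinearMap.ext fun g ↦ by simpa using hB 0 g, fun f g ↦ ?_⟩
    have h : B.flip g ∘ₗ LinearMap.mulLeft R (T 1) = B.flip (Y.symm g) :=
      linearMap_ext_T fun m ↦ by
        rw [LinearMap.comp_apply, LinearMap.mulLeft_apply, LinearMap.BilinForm.flip_apply,
          LinearMap.BilinForm.flip_apply, ← T_add, hB, hB,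
          neg_add_rev, zpow_add, zpow_neg_one, LinearEquiv.mul_apply, inv_apply]
    exact LinearMap.congr_fun h f
  · rintro ⟨hone, hX⟩ m
    induction m using Int.induction_on with
    | zero => intro g; rw [T_zero, hone, neg_zero, zpow_zero, LinearEquiv.coe_one, id]
    | succ n ih =>
      intro g
      rw [add_comm, T_add, hX, ih, neg_add_rev, zpow_add, zpow_neg_one, LinearEquiv.mul_apply,
        inv_apply]
    | pred n ih =>
      intro g
      have h := hX (T (-n - 1)) (Y g)
      rw [← T_add, add_sub_cancel, Y.symm_apply_apply] at h
      rw [← h, ih, neg_sub, sub_neg_eq_add, neg_neg, add_comm, zpow_add_one,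
        LinearEquiv.mul_apply]

namespace IsDualityPairing

theorem one_left (hB : IsDualityPairing Y ev B) : B 1 = ev :=
  (isDualityPairing_iff.1 hB).1

theorem T_one_mul_left (hB : IsDualityPairing Y ev B) (f g : R[T;T⁻¹]) :
    B (T 1 * f) g = B f (Y.symm g) :=
  (isDualityPairing_iff.1 hB).2 f g

theorem T_neg_one_mul_left (hB : IsDualityPairing Y ev B) (f g : R[T;T⁻¹]) :
    B (T (-1) * f) g = B f (Y g) := by
  have h := hB.T_one_mul_left (T (-1) * f) (Y g)
  rwa [T_one_mul_T_neg_one_mul, Y.symm_apply_apply, eq_comm] at h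

theorem unique {B' : LinearMap.BilinForm R R[T;T⁻¹]} (hB : IsDualityPairing Y ev B)
    (hB' : IsDualityPairing Y ev B') : B = B' :=
  linearMap_ext_T fun m ↦ LinearMap.ext fun g ↦ by rw [hB, hB']

/-- The relation `hQ` is the image of `hP` under the anti-involution `X ↦ Y⁻¹`, `P ↦ Q`, so that
adjointness propagates along multiplication by `X` and `X⁻¹`. -/
theorem isAdjointPair_of_relation (hB : IsDualityPairing Y ev B)
    {P Q : R[T;T⁻¹] →ₗ[R] R[T;T⁻¹]} (a : Rˣ) (b d : R)
    (P_one : P 1 = d • 1) (ev_Q : ∀ g, ev (Q g) = d * ev g)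
    (hP : ∀ f, P (T 1 * f) = T (-1) * ((a : R) • P f - b • f))
    (hQ : ∀ g, Y.symm (Q g) = (a : R) • Q (Y g) - b • Y g) : B.IsAdjointPair B P Q := by
  have h : B ∘ₗ P = B.compl₂ Q := by
    refine linearMap_ext_T_one_mul (LinearMap.ext fun g ↦ ?_) fun f ↦ ?_
    · simp only [LinearMap.comp_apply, LinearMap.compl₂_apply, P_one, map_smul,
        LinearMap.smul_apply, hB.one_left, ev_Q, smul_eq_mul]
    · have left (g) : B (P (T 1 * f)) g = a * B (P f) (Y g) - b * B f (Y g) := by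
        rw [hP, hB.T_neg_one_mul_left, map_sub, map_smul, map_smul]; rfl
      have right (g) : B (T 1 * f) (Q g) = a * B f (Q (Y g)) - b * B f (Y g) := by
        rw [hB.T_one_mul_left, hQ, map_sub, map_smul, map_smul]; rfl
      simp only [LinearMap.ext_iff, LinearMap.comp_apply, LinearMap.compl₂_apply, left, right,
        sub_left_inj, Units.mul_right_inj]
      exact Y.forall_congr_right (q := fun g ↦ B (P f) g = B f (Q g))
  exact LinearMap.isAdjointPair_iff_comp_eq_compl₂.2 h

section Adjoints

variable {q2 t2 : Rˣ} {τ π : R[T;T⁻¹] →ₗ[R] R[T;T⁻¹]}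

theorem isAdjointPair_demazureLusztig (hB : IsDualityPairing Y ev B)
    (hτ : IsDemazureLusztig t2 τ) (hπ : IsReflection q2 π)
    (hev : ∀ m : ℤ, ev (T m) = ↑(t2⁻¹ ^ m)) (hY : ∀ f, Y f = π (τ f)) :
    B.IsAdjointPair B τ τ := by
  refine hB.isAdjointPair_of_relation 1 (t2 - ↑t2⁻¹) t2 hτ.apply_one (hτ.eval_apply hev)
    (fun f ↦ ?_) fun g ↦ ?_
  · rw [Units.val_one, one_smul, hτ.apply_T_one_mul]
  · rw [Units.val_one, one_smul, hτ.symm_apply hπ hY, hY]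

theorem isAdjointPair_reflection (hB : IsDualityPairing Y ev B)
    (hτ : IsDemazureLusztig t2 τ) (hπ : IsReflection q2 π)
    (hev : ∀ m : ℤ, ev (T m) = ↑(t2⁻¹ ^ m)) (hY : ∀ f, Y f = π (τ f)) :
    B.IsAdjointPair B π (LinearMap.mulLeft R (T 1) ∘ₗ τ) := by
  refine hB.isAdjointPair_of_relation q2 0 1 (by rw [hπ.apply_one, one_smul])
    (fun g ↦ ?_) (fun f ↦ ?_) fun g ↦ ?_
  · rw [LinearMap.comp_apply, LinearMap.mulLeft_apply, eval_T_one_mul hev, hτ.eval_apply hev,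
      Units.inv_mul_cancel_left, one_mul]
  · rw [zero_smul, sub_zero, hπ.apply_T_one_mul, mul_smul_comm]
  · simp only [LinearMap.comp_apply, LinearMap.mulLeft_apply]
    rw [hτ.symm_apply hπ hY, hπ.apply_T_one_mul, ← hY, map_smul, hτ.apply_T_neg_one_mul,
      smul_comm _ (q2 : R), ← smul_sub, add_sub_cancel_right, zero_smul, sub_zero]

theorem isAdjointPair_symm (hB : IsDualityPairing Y ev B)
    (hτ : IsDemazureLusztig t2 τ) (hπ : IsReflection q2 π)
    (hev : ∀ m : ℤ, ev (T m) = ↑(t2⁻¹ ^ m)) (hY : ∀ f, Y f = π (τ f)) :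
    B.IsAdjointPair B Y.symm (T 1 * ·) := fun f g ↦
  calc B (Y.symm f) g
      = B (τ (π f)) g - (t2 - ↑t2⁻¹ : R) • B (π f) g := by
        rw [hτ.symm_apply hπ hY, map_sub, map_smul]; rfl
    _ = B (π f) (τ g - (t2 - ↑t2⁻¹ : R) • g) := by
        rw [hB.isAdjointPair_demazureLusztig hτ hπ hev hY, map_sub, map_smul]
    _ = B f (T 1 * g) := by
        rw [hB.isAdjointPair_reflection hτ hπ hev hY, LinearMap.comp_apply, hτ.apply_sub_smul]
        rfl

theorem one_right (hB : IsDualityPairing Y ev B) (hτ : IsDemazureLusztig t2 τ)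
    (hπ : IsReflection q2 π) (hev : ∀ m : ℤ, ev (T m) = ↑(t2⁻¹ ^ m))
    (hY : ∀ f, Y f = π (τ f)) (f : R[T;T⁻¹]) : B f 1 = ev f := by
  have h : B.flip 1 = ev := by
    refine linearMap_ext_T_one_mul ?_ fun f ↦ ?_
    · rw [LinearMap.BilinForm.flip_apply, hB.one_left]
    · rw [LinearMap.BilinForm.flip_apply, hB.T_one_mul_left, hτ.symm_one hπ hY, map_smul,
        smul_eq_mul, eval_T_one_mul hev, Units.mul_right_inj, LinearMap.BilinForm.flip_apply]
  exact LinearMap.congr_fun h f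

theorem isSymm (hB : IsDualityPairing Y ev B) (hτ : IsDemazureLusztig t2 τ)
    (hπ : IsReflection q2 π) (hev : ∀ m : ℤ, ev (T m) = ↑(t2⁻¹ ^ m))
    (hY : ∀ f, Y f = π (τ f)) : B.IsSymm := by
  have hflip : IsDualityPairing Y ev B.flip := isDualityPairing_iff.2
    ⟨LinearMap.ext (hB.one_right hτ hπ hev hY),
      fun f g ↦ (hB.isAdjointPair_symm hτ hπ hev hY g f).symm⟩
  exact LinearMap.BilinForm.isSymm_iff_flip.2 (hflip.unique hB)

end Adjoints

end IsDualityPairing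

end Pairing

theorem mem_ker_of_isAdjointPair {M : Type*} [AddCommGroup M] [Module R M]
    {B : LinearMap.BilinForm R M} {P Q : M → M} (h : B.IsAdjointPair B P Q) {f : M}
    (hf : f ∈ LinearMap.ker B) : P f ∈ LinearMap.ker B :=
  LinearMap.mem_ker.2 <| LinearMap.ext fun g ↦ by rw [h, LinearMap.mem_ker.1 hf]; rfl

theorem zpow_mem_of_mem {M : Type*} [AddCommGroup M] [Module R M] {Y : M ≃ₗ[R] M}
    {U : Submodule R M} (hU : ∀ f ∈ U, Y f ∈ U ∧ Y.symm f ∈ U) (m : ℤ) :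
    ∀ f ∈ U, (Y ^ m) f ∈ U := by
  induction m using Int.induction_on with
  | zero => exact fun f hf ↦ hf
  | succ n ih =>
    intro f hf
    rw [zpow_add_one]
    exact ih _ (hU f hf).1
  | pred n ih =>
    intro f hf
    rw [zpow_sub_one]
    exact ih _ (hU f hf).2

theorem exists_linearEquiv_zpow_eq {M : Type*} [AddCommGroup M] [Module R M]
    {Yz : ℤ → M →ₗ[R] M} (hzero : Yz 0 = LinearMap.id)
    (hadd : ∀ a b, Yz (a + b) = Yz a ∘ₗ Yz b) :
    ∃ Y : M ≃ₗ[R] M, ∀ (m : ℤ) (f : M), (Y ^ m) f = Yz m f := by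
  let φ : Multiplicative ℤ →* Module.End R M :=
    { toFun := fun m ↦ Yz m.toAdd, map_one' := hzero, map_mul' := fun a b ↦ hadd a.toAdd b.toAdd }
  let ψ : Multiplicative ℤ →* (M ≃ₗ[R] M) :=
    (LinearMap.GeneralLinearGroup.generalLinearEquiv R M).toMonoidHom.comp φ.toHomUnits
  refine ⟨ψ (Multiplicative.ofAdd 1), fun m f ↦ ?_⟩
  rw [← map_zpow, ← ofAdd_zsmul, smul_eq_mul, mul_one]
  rfl

theorem stmt8_general {q2 t2 : Rˣ} {τ π : R[T;T⁻¹] →ₗ[R] R[T;T⁻¹]}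
    {Y : R[T;T⁻¹] ≃ₗ[R] R[T;T⁻¹]} {ev : R[T;T⁻¹] →ₗ[R] R} {B : LinearMap.BilinForm R R[T;T⁻¹]}
    (hτ : IsDemazureLusztig t2 τ) (hπ : IsReflection q2 π) (hY : ∀ f, Y f = π (τ f))
    (hev : ∀ m : ℤ, ev (T m) = ↑(t2⁻¹ ^ m)) (hB : IsDualityPairing Y ev B) :
    (∀ f ∈ LinearMap.ker B,
      τ f ∈ LinearMap.ker B ∧ π f ∈ LinearMap.ker B ∧ T 1 * f ∈ LinearMap.ker B) ∧
    LinearMap.ker B ≤ LinearMap.ker ev ∧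
    ∀ U : Submodule R R[T;T⁻¹], (∀ f ∈ U, Y f ∈ U ∧ Y.symm f ∈ U) →
      U ≤ LinearMap.ker ev → U ≤ LinearMap.ker B := by
  refine ⟨fun f hf ↦ ⟨?_, ?_, ?_⟩, fun f hf ↦ ?_, fun U hUY hUev f hf ↦ ?_⟩
  · exact mem_ker_of_isAdjointPair (hB.isAdjointPair_demazureLusztig hτ hπ hev hY) hf
  · exact mem_ker_of_isAdjointPair (hB.isAdjointPair_reflection hτ hπ hev hY) hf
  · exact mem_ker_of_isAdjointPair (P := (T 1 * ·)) hB.T_one_mul_left hf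
  · rw [LinearMap.mem_ker, ← hB.one_right hτ hπ hev hY, LinearMap.mem_ker.1 hf,
      LinearMap.zero_apply]
  · refine LinearMap.mem_ker.2 (linearMap_ext_T fun m ↦ ?_)
    rw [(hB.isSymm hτ hπ hev hY).eq, hB, LinearMap.zero_apply]
    exact hUev (zpow_mem_of_mem hUY _ f hf)

end LaurentPolynomials

/-- `Rad ⊆ ker(ev)`, and every `A`-submodule of `V` contained in
`ker(ev)` is contained in `Rad`; i.e. `Rad` is the greatest `A`-submodule of
`V` contained in the hyperplane `{f : f(t⁻½) = 0}`. -/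
theorem stmt8
    (q2 t2 : ℂ) (hq2 : q2 ≠ 0) (ht2 : t2 ≠ 0)
    (S Top Pi Y : V →ₗ[ℂ] V)
    (hS : ∀ m : ℤ, S (Xm m) = Xm (-m))
    (hPi : ∀ m : ℤ, Pi (Xm m) = q2 ^ m • Xm (-m))
    (hT : ∀ f : V, (Xm 2 - 1) * Top f
        = t2 • ((Xm 2 - 1) * S f) + (t2 - t2⁻¹) • (S f - f))
    (hY : Y = Pi ∘ₗ Top)
    (ev : V →ₗ[ℂ] ℂ) (hev : ∀ m : ℤ, ev (Xm m) = t2 ^ (-m))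
    (Yz : ℤ → V →ₗ[ℂ] V)
    (hYz0 : Yz 0 = LinearMap.id) (hYz1 : Yz 1 = Y)
    (hYzadd : ∀ a b : ℤ, Yz (a + b) = Yz a ∘ₗ Yz b)
    (pair : V →ₗ[ℂ] V →ₗ[ℂ] ℂ)
    (hpair : ∀ (m : ℤ) (g : V), pair (Xm m) g = ev (Yz (-m) g))
    :
    (∀ f ∈ Rad pair, ev f = 0) ∧
    ∀ U : Submodule ℂ V,
      (∀ f ∈ U, Top f ∈ U ∧ Pi f ∈ U ∧ Xm 1 * f ∈ U) →
      (∀ f ∈ U, ev f = 0) →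
      U ≤ Rad pair := by
  have hτ : IsDemazureLusztig (Units.mk0 t2 ht2) Top := fun f ↦ by
    rw [← apply_eq_invert_of_apply_T hS]; exact hT f
  have hπ : IsReflection (Units.mk0 q2 hq2) Pi := fun m ↦ by
    rw [Units.val_zpow_eq_zpow_val]; exact hPi m
  have hev' (m : ℤ) : ev (LaurentPolynomial.T m) = ↑((Units.mk0 t2 ht2)⁻¹ ^ m) := by
    rw [inv_zpow', Units.val_zpow_eq_zpow_val]; exact hev m
  obtain ⟨Y', hY'⟩ := exists_linearEquiv_zpow_eq hYz0 hYzadd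
  have hY'T (f : V) : Y' f = Pi (Top f) := by simpa [hYz1, hY] using hY' 1 f
  have hB : IsDualityPairing Y' ev pair := fun m g ↦ by rw [hY']; exact hpair m g
  obtain ⟨-, hker, hmax⟩ := stmt8_general hτ hπ hY'T hev' hB
  exact ⟨hker, fun U hU ↦ hmax U <|
    hτ.mem_and_symm_mem hπ hY'T fun f hf ↦ ⟨(hU f hf).1, (hU f hf).2.1⟩⟩
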